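/- arXiv:2001.05640 — 5 statements merged into one kernel-verified Lean document; each statement's English description precedes it below -/
import Mathlib

section
/- For every l ∈ {2,…,K}: Ψ(2^{l−1}) = {l−1}, and for every k ∈ {1,…,2^{l−1}}, Ψ(2^{l−1} + k) = {l−1, l} △ Ψ(k). -/
/-- `η(k) = 1` if `k` is even and `η(k) = ν₂(k−1) + 1` if `k` is odd (used for `k ≥ 2`),
where `ν₂(m) = padicValNat 2 m` is the 2-adic valuation. -/
def eta (k : ℕ) : ℕ := if Even k then 1 else padicValNat 2 (k - 1) + 1

/-- The set-level form `Ψ` of the map `ψ` of the paper: `Ψ(1) = ∅` and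
`Ψ(k) = Ψ(k−1) △ {η(k)}` for `k ≥ 2` (`Ψ(0)` is junk). -/
def Psi : ℕ → Finset ℕ
  | 0 => ∅
  | 1 => ∅
  | k + 2 => symmDiff (Psi (k + 1)) {eta (k + 2)}

theorem eta_aux (k : ℕ) (hk : 1 ≤ k) : eta (k + 1) = padicValNat 2 k + 1 := by
  unfold eta
  split_ifs with h
  · have : ¬ 2 ∣ k := by
      rw [Nat.even_iff] at h
      omega
    rw [padicValNat.eq_zero_of_not_dvd this]
  · simp

theorem Psi_step (k : ℕ) (hk : 1 ≤ k) :
    Psi (k + 1) = symmDiff (Psi k) {padicValNat 2 k + 1} := by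
  rw [← eta_aux k hk]
  obtain ⟨j, rfl⟩ := Nat.exists_eq_add_of_le' hk
  rw [Psi]

theorem val_aux (m k : ℕ) (hk : 1 ≤ k) (h : k < 2 ^ m) :
    padicValNat 2 (2 ^ m + k) = padicValNat 2 k := by
  have key : ∀ a, a ≤ padicValNat 2 (2 ^ m + k) ↔ a ≤ padicValNat 2 k := by
    intro a
    rw [← padicValNat_dvd_iff_le (by omega), ← padicValNat_dvd_iff_le (by omega)]
    rcases le_total a m with ha | ha
    · exact Nat.dvd_add_right (pow_dvd_pow 2 ha)
    · have hdvd : 2 ^ m ∣ 2 ^ a := pow_dvd_pow 2 ha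
      have hn : ¬ 2 ^ m ∣ k := fun hd => absurd (Nat.le_of_dvd hk hd) (by omega)
      constructor
      · intro hd
        exact absurd ((Nat.dvd_add_right (dvd_refl _)).1 (hdvd.trans hd)) hn
      · intro hd
        exact absurd (hdvd.trans hd) hn
  exact le_antisymm ((key _).1 le_rfl) ((key _).2 le_rfl)

theorem Psi_shift (m : ℕ) (h : Psi (2 ^ m) = {m}) :
    ∀ k, 1 ≤ k → k ≤ 2 ^ m →
      Psi (2 ^ m + k) = symmDiff {m, m + 1} (Psi k) := by
  intro k hk
  induction k, hk using Nat.le_induction with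
  | base =>
    intro _
    rw [Psi_step _ Nat.one_le_two_pow, h, padicValNat.prime_pow]
    ext x
    simp [Psi, Finset.mem_symmDiff]
    omega
  | succ k hk ih =>
    intro hle
    rw [← add_assoc, Psi_step _ (by omega), ih (by omega), val_aux m k hk (by omega),
      Psi_step k hk, symmDiff_assoc]

theorem Psi_pow (m : ℕ) (hm : 1 ≤ m) : Psi (2 ^ m) = {m} := by
  induction m, hm using Nat.le_induction with
  | base => 
    rw [pow_one, Psi_step 1 le_rfl]
    ext x
    simp [Psi, Finset.mem_symmDiff]
  | succ m hm ih =>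
    rw [pow_succ, mul_two, Psi_shift m ih _ Nat.one_le_two_pow le_rfl, ih]
    ext x
    simp [Finset.mem_symmDiff]
    omega

/-- For every `l ∈ {2,…,K}`: `Ψ(2^(l−1)) = {l−1}`, and for every
`k ∈ {1,…,2^(l−1)}`, `Ψ(2^(l−1) + k) = {l−1, l} △ Ψ(k)` (equation (2.10)). -/
theorem psi_recursion (K : ℕ) : ∀ l, 2 ≤ l → l ≤ K →
    Psi (2 ^ (l - 1)) = {l - 1} ∧
    ∀ k, 1 ≤ k → k ≤ 2 ^ (l - 1) →
      Psi (2 ^ (l - 1) + k) = symmDiff {l - 1, l} (Psi k) := by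
  
  intro l hl _
  obtain ⟨m, rfl⟩ := Nat.exists_eq_add_of_le' (show 1 ≤ l by omega)
  rw [Nat.add_sub_cancel]
  have h := Psi_pow m (by omega)
  exact ⟨h, Psi_shift m h⟩
end

section
/- For every k ∈ {1,…,2^{K−1}}, Ψ(2k) = Φ(k). -/
/-- `θ(k) = 2` if `k` is even and `θ(k) = ν₂(k−1) + 2` if `k` is odd (used for `k ≥ 2`). -/
def theta (k : ℕ) : ℕ := if Even k then 2 else padicValNat 2 (k - 1) + 2

/-- The set-level form `Φ` of the odd-ordered map `φ` of the paper: `Φ(1) = {1}`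
and `Φ(k) = Φ(k−1) △ {1, θ(k)}` for `k ≥ 2` (`Φ(0)` is junk). -/
def Phi : ℕ → Finset ℕ
  | 0 => ∅
  | 1 => {1}
  | k + 2 => symmDiff (Phi (k + 1)) {1, theta (k + 2)}

theorem eta_odd_eq_theta (k : ℕ) : eta (2 * k + 3) = theta (k + 2) := by
  have h1 : ¬ Even (2 * k + 3) := by
    rw [Nat.not_even_iff_odd]; exact ⟨k + 1, by ring⟩
  have h2 : padicValNat 2 (2 * k + 3 - 1) = padicValNat 2 (k + 1) + 1 := by
    have : 2 * k + 3 - 1 = 2 * (k + 1) := by omega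
    rw [this, padicValNat.mul (by norm_num) (by omega), padicValNat.self (by norm_num)]
    ring
  unfold eta theta
  rw [if_neg h1, h2]
  split_ifs with h
  · have : padicValNat 2 (k + 1) = 0 := by
      apply padicValNat.eq_zero_of_not_dvd
      rw [Nat.even_iff] at h
      omega
    rw [this]
  · rfl

theorem two_le_theta (k : ℕ) : 2 ≤ theta k := by
  unfold theta; split_ifs <;> omega

theorem psi_two_mul_succ (k : ℕ) : Psi (2 * (k + 1)) = Phi (k + 1) := by
  induction k with
  | zero => simp [Psi, Phi, eta]
  | succ k ih =>
    have e : 2 * (k + 1 + 1) = (2 * k + 2) + 2 := by ring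
    have hE : eta (2 * k + 2 + 2) = 1 := by
      unfold eta; rw [if_pos ⟨k + 2, by ring⟩]
    have ih' : Psi (2 * k + 2) = Phi (k + 1) := ih
    have hO : Psi (2 * k + 2 + 1) = symmDiff (Psi (2 * k + 2)) {eta (2 * k + 3)} := by
      rw [Psi]
    have hP : Phi (k + 1 + 1) = symmDiff (Phi (k + 1)) {1, theta (k + 2)} := by
      rw [Phi]
    rw [e, Psi, hE, hO, ih', eta_odd_eq_theta, hP, symmDiff_assoc]
    congr 1
    have h := two_le_theta (k + 2)
    ext x
    simp only [Finset.mem_symmDiff, Finset.mem_singleton, Finset.mem_insert]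
    omega

/-- Equation (2.9): for every `k ∈ {1,…,2^(K−1)}`, `Ψ(2k) = Φ(k)`. -/
theorem psi_two_mul_eq_phi (K : ℕ) (hK : 1 ≤ K) :
    ∀ k, 1 ≤ k → k ≤ 2 ^ (K - 1) → Psi (2 * k) = Phi k := by
  intro k hk _
  obtain ⟨n, rfl⟩ : ∃ n, k = n + 1 := ⟨k - 1, by omega⟩
  exact psi_two_mul_succ n
end

section
/- The map Φ is odd-ordered: for every k ∈ {1,…,K}, the image Φ({1,…,2^{k−1}}) equals the collection of all odd-cardinality subsets of {1,…,k}. In particular Φ is a bijection from {1,…,2^{K−1}} onto the odd-cardinality subsets of {1,…,K}. -/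
theorem theta_eq (n : ℕ) : theta (n + 2) = padicValNat 2 (n + 1) + 2 := by
  unfold theta
  split_ifs with h
  · have : ¬ 2 ∣ n + 1 := by
      rw [Nat.even_iff] at h; omega
    rw [padicValNat.eq_zero_of_not_dvd this]
  · rfl

theorem Phi_step (n : ℕ) :
    Phi (n + 2) = symmDiff (Phi (n + 1)) {1, padicValNat 2 (n + 1) + 2} := by
  rw [← theta_eq]; rfl

theorem odd_card_symmDiff (s t : Finset ℕ) :
    Odd (symmDiff s t).card ↔ (Odd s.card ↔ ¬ Odd t.card) := by
  have h1 : (symmDiff s t).card = (s \ t).card + (t \ s).card := by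
    rw [symmDiff_def]
    exact Finset.card_union_of_disjoint disjoint_sdiff_sdiff
  have h2 := Finset.card_sdiff_add_card_inter s t
  have h3 := Finset.card_sdiff_add_card_inter t s
  rw [Finset.inter_comm t s] at h3
  simp only [Nat.odd_iff]
  omega

theorem Phi_odd (n : ℕ) : Odd (Phi (n + 1)).card := by
  induction n with
  | zero => simp [Phi]
  | succ n ih =>
    rw [Phi_step, odd_card_symmDiff]
    have : ({1, padicValNat 2 (n + 1) + 2} : Finset ℕ).card = 2 :=
      Finset.card_pair (by omega)
    rw [this]
    simp only [ih, true_iff]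
    decide

theorem val_lt (m n : ℕ) (h0 : 0 < n) (h : n < 2 ^ m) : padicValNat 2 n < m := by
  have h1 : 2 ^ padicValNat 2 n ≤ n := Nat.le_of_dvd h0 pow_padicValNat_dvd
  exact (Nat.pow_lt_pow_iff_right (by norm_num : 1 < 2)).1 (lt_of_le_of_lt h1 h)

theorem val_add (m i : ℕ) (h0 : 0 < i) (h : i < 2 ^ m) :
    padicValNat 2 (2 ^ m + i) = padicValNat 2 i := by
  have hlt := val_lt m i h0 h
  apply le_antisymm
  · by_contra! hc
    have h1 : 2 ^ (padicValNat 2 i + 1) ∣ 2 ^ m + i :=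
      (pow_dvd_pow 2 hc).trans pow_padicValNat_dvd
    have h2 : 2 ^ (padicValNat 2 i + 1) ∣ i :=
      (Nat.dvd_add_right (pow_dvd_pow 2 hlt)).1 h1
    exact pow_succ_padicValNat_not_dvd (p := 2) (by omega) h2
  · have h1 : 2 ^ padicValNat 2 i ∣ 2 ^ m + i :=
      dvd_add (pow_dvd_pow 2 hlt.le) pow_padicValNat_dvd
    exact (padicValNat_dvd_iff_le (by omega)).1 h1

theorem Phi_sub (m n : ℕ) (h : n < 2 ^ m) : Phi (n + 1) ⊆ Finset.Icc 1 (m + 1) := by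
  induction n with
  | zero => simp [Phi]
  | succ n ih =>
    have ih := ih (by omega)
    have hv := val_lt m (n + 1) (by omega) h
    rw [Phi_step]
    intro x hx
    rw [Finset.mem_symmDiff] at hx
    rcases hx with ⟨hx, -⟩ | ⟨hx, -⟩
    · exact ih hx
    · simp only [Finset.mem_insert, Finset.mem_singleton] at hx
      rw [Finset.mem_Icc]
      omega

/-- The translation set. -/
def Cset (m : ℕ) : Finset ℕ := symmDiff (Phi (2 ^ m + 1)) {1}

theorem Phi_add (m i : ℕ) (h : i < 2 ^ m) :
    Phi (2 ^ m + i + 1) = symmDiff (Phi (i + 1)) (Cset m) := by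
  induction i with
  | zero =>
    have : Phi (0 + 1) = {1} := by simp [Phi]
    rw [this, Cset, symmDiff_comm (Phi _), symmDiff_symmDiff_cancel_left, add_zero]
  | succ i ih =>
    have ih := ih (by omega)
    have e : 2 ^ m + (i + 1) + 1 = (2 ^ m + i) + 2 := by omega
    have hv := val_add m (i + 1) (by omega) h
    rw [e, Phi_step, ih, Phi_step, add_assoc (2 ^ m), hv, symmDiff_right_comm]

theorem Cset_odd (m : ℕ) : ¬ Odd (Cset m).card := by
  rw [Cset, odd_card_symmDiff]
  simp [Phi_odd]

theorem Cset_eq (m : ℕ) : Cset m = symmDiff (Phi (2 ^ m - 1 + 1)) {m + 2} := by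
  have hp : 0 < 2 ^ m := by positivity
  have e : 2 ^ m + 1 = (2 ^ m - 1) + 2 := by omega
  have e2 : 2 ^ m - 1 + 1 = 2 ^ m := by omega
  rw [Cset, e, Phi_step, e2, padicValNat.prime_pow, symmDiff_assoc]
  congr 1

theorem Cset_mem (m : ℕ) : m + 2 ∈ Cset m := by
  have hp : 0 < 2 ^ m := by positivity
  rw [Cset_eq, Finset.mem_symmDiff]
  right
  refine ⟨by simp, fun h => ?_⟩
  have := Phi_sub m (2 ^ m - 1) (by omega) h
  rw [Finset.mem_Icc] at this
  omega

theorem Cset_sub (m : ℕ) : Cset m ⊆ Finset.Icc 1 (m + 2) := by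
  have hp : 0 < 2 ^ m := by positivity
  rw [Cset_eq]
  intro x hx
  rw [Finset.mem_symmDiff] at hx
  rw [Finset.mem_Icc]
  rcases hx with ⟨hx, -⟩ | ⟨hx, -⟩
  · have := Phi_sub m (2 ^ m - 1) (by omega) hx
    rw [Finset.mem_Icc] at this
    omega
  · rw [Finset.mem_singleton] at hx
    omega

theorem Phi_notMem (m i : ℕ) (h : i < 2 ^ m) : m + 2 ∉ Phi (i + 1) := fun hx => by
  have := Phi_sub m i h hx
  rw [Finset.mem_Icc] at this
  omega

theorem Phi_mem (m i : ℕ) (h : i < 2 ^ m) : m + 2 ∈ Phi (2 ^ m + i + 1) := by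
  rw [Phi_add m i h, Finset.mem_symmDiff]
  exact Or.inr ⟨Cset_mem m, Phi_notMem m i h⟩

theorem Phi_inj (m : ℕ) : ∀ i j, i < 2 ^ m → j < 2 ^ m → Phi (i + 1) = Phi (j + 1) → i = j := by
  induction m with
  | zero => intro i j hi hj _; simp at hi hj; omega
  | succ m ih =>
    intro i j hi hj h
    rw [pow_succ] at hi hj
    rcases lt_or_ge i (2 ^ m) with h1 | h1 <;> rcases lt_or_ge j (2 ^ m) with h2 | h2
    · exact ih i j h1 h2 h
    · obtain ⟨b, rfl⟩ := Nat.exists_eq_add_of_le h2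
      exact absurd (h ▸ Phi_mem m b (by omega)) (Phi_notMem m i h1)
    · obtain ⟨a, rfl⟩ := Nat.exists_eq_add_of_le h1
      exact absurd (h ▸ Phi_mem m a (by omega)) (Phi_notMem m j h2)
    · obtain ⟨a, rfl⟩ := Nat.exists_eq_add_of_le h1
      obtain ⟨b, rfl⟩ := Nat.exists_eq_add_of_le h2
      rw [Phi_add m a (by omega), Phi_add m b (by omega)] at h
      rw [ih a b (by omega) (by omega) (symmDiff_left_injective _ h)]

theorem Phi_surj (m : ℕ) : ∀ S : Finset ℕ, S ⊆ Finset.Icc 1 (m + 1) → Odd S.card →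
    ∃ i < 2 ^ m, Phi (i + 1) = S := by
  induction m with
  | zero =>
    intro S hS ho
    refine ⟨0, by simp, ?_⟩
    have hS' : S ⊆ {1} := by simpa using hS
    rcases Finset.subset_singleton_iff.1 hS' with rfl | rfl
    · simp at ho
    · simp [Phi]
  | succ m ih =>
    intro S hS ho
    by_cases hm : m + 2 ∈ S
    · obtain ⟨i, hi, he⟩ := ih (symmDiff S (Cset m)) (by
        intro x hx
        have hx2 : x ∈ Finset.Icc 1 (m + 2) := by
          rw [Finset.mem_symmDiff] at hx
          rcases hx with ⟨hx, -⟩ | ⟨hx, -⟩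
          · exact hS hx
          · exact Cset_sub m hx
        have hne : x ≠ m + 2 := by
          rintro rfl
          rw [Finset.mem_symmDiff] at hx
          have := Cset_mem m
          tauto
        rw [Finset.mem_Icc] at hx2 ⊢
        omega) (by
        rw [odd_card_symmDiff]
        have := Cset_odd m
        tauto)
      refine ⟨2 ^ m + i, by rw [pow_succ]; omega, ?_⟩
      rw [Phi_add m i hi, he, symmDiff_symmDiff_cancel_right]
    · obtain ⟨i, hi, he⟩ := ih S (by
        intro x hx
        have hx2 := hS hx
        have hne : x ≠ m + 2 := by
          rintro rfl
          exact hm hx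
        rw [Finset.mem_Icc] at hx2 ⊢
        omega) ho
      exact ⟨i, by rw [pow_succ]; omega, he⟩

theorem Phi_image (m : ℕ) : Phi '' Set.Icc 1 (2 ^ m)
    = {S : Finset ℕ | S ⊆ Finset.Icc 1 (m + 1) ∧ Odd S.card} := by
  ext S
  simp only [Set.mem_image, Set.mem_Icc, Set.mem_ofPred_eq]
  constructor
  · rintro ⟨n, ⟨h1, h2⟩, rfl⟩
    obtain ⟨i, rfl⟩ := Nat.exists_eq_add_of_le' h1
    exact ⟨Phi_sub m i (by omega), Phi_odd i⟩
  · rintro ⟨h1, h2⟩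
    obtain ⟨i, hi, he⟩ := Phi_surj m S h1 h2
    exact ⟨i + 1, ⟨by omega, by omega⟩, he⟩

/-- Theorem 2.4: the map `Φ` is odd-ordered, i.e. for every `k ∈ {1,…,K}` the image
`Φ({1,…,2^(k−1)})` is exactly the collection of odd-cardinality subsets of `{1,…,k}`;
in particular `Φ` restricts to a bijection from `{1,…,2^(K−1)}` onto the
odd-cardinality subsets of `{1,…,K}`. -/
theorem phi_odd_ordered (K : ℕ) (hK : 1 ≤ K) :
    (∀ k, 1 ≤ k → k ≤ K →
      Phi '' Set.Icc 1 (2 ^ (k - 1))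
        = {S : Finset ℕ | S ⊆ Finset.Icc 1 k ∧ Odd S.card}) ∧
    Set.BijOn Phi (Set.Icc 1 (2 ^ (K - 1)))
      {S : Finset ℕ | S ⊆ Finset.Icc 1 K ∧ Odd S.card} := by
  have key : ∀ k, 1 ≤ k → Phi '' Set.Icc 1 (2 ^ (k - 1))
        = {S : Finset ℕ | S ⊆ Finset.Icc 1 k ∧ Odd S.card} := by
    intro k hk
    obtain ⟨m, rfl⟩ := Nat.exists_eq_add_of_le' hk
    exact Phi_image m
  refine ⟨fun k hk _ => key k hk, ?_⟩
  rw [← key K hK]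
  apply Set.InjOn.bijOn_image
  rintro a ⟨ha, ha'⟩ b ⟨hb, hb'⟩ h
  obtain ⟨i, rfl⟩ := Nat.exists_eq_add_of_le' ha
  obtain ⟨j, rfl⟩ := Nat.exists_eq_add_of_le' hb
  rw [Phi_inj (K - 1) i j (by omega) (by omega) h]
end

section
/- Let K ∈ ℕ, T > 0, n ∈ ℕ and d ∈ ℕ with d ≤ 2^{K−1}, and let ΔZ₁, …, ΔZ_n be independent ℝ^d-valued random vectors, each distributed as the Haar mimicking vector ΔZ with (ΔZ)^j = h_j^{(K)}(U)·√(T/n). Then E[( ∑_{i=1}^d ( ∑_{ℓ=1}^n (ΔZ_ℓ)^i )² )²] = (d² + 2d)·T² − (2d + d·(d − 2^{K−1}))·T²/n. -/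
/-- The Haar-type function `h_k^(K)` on `{1,…,2^K}`:
`h_k^(K)(x) = 2^((K-1)/2)` if `x = 2k-1`, `-2^((K-1)/2)` if `x = 2k`, and `0` otherwise. -/
noncomputable def haar (K k x : ℕ) : ℝ :=
  if x = 2 * k - 1 then (2 : ℝ) ^ (((K : ℝ) - 1) / 2)
  else if x = 2 * k then -((2 : ℝ) ^ (((K : ℝ) - 1) / 2))
  else 0

theorem sum_cons_rec {α : Type*} [Fintype α] (f g : α → ℝ) (Φ : ℝ → ℝ → ℝ) (n : ℕ) :
    ∑ u : Fin (n + 1) → α, Φ (∑ l, f (u l)) (∑ l, g (u l))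
      = ∑ u : Fin n → α, ∑ a : α, Φ (f a + ∑ l, f (u l)) (g a + ∑ l, g (u l)) := by
  rw [Finset.sum_comm, ← Fintype.sum_prod_type'
    (f := fun (a : α) (u : Fin n → α) => Φ (f a + ∑ l, f (u l)) (g a + ∑ l, g (u l)))]
  refine (Fintype.sum_equiv (Fin.consEquiv (fun _ : Fin (n + 1) => α)) _ _ ?_).symm
  rintro ⟨a, u⟩
  simp [Fin.consEquiv, Fin.sum_univ_succ]

theorem moments {α : Type*} [Fintype α] (f g : α → ℝ) (N c q : ℝ)
    (hN : (Fintype.card α : ℝ) = N)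
    (hf : ∑ a, f a = 0) (hg : ∑ a, g a = 0) (hff : ∑ a, f a ^ 2 = N) (hgg : ∑ a, g a ^ 2 = N)
    (hfg : ∑ a, f a * g a = N * c) (hq : ∑ a, f a ^ 2 * g a ^ 2 = N * q) (n : ℕ) :
    (∑ u : Fin n → α, ∑ l, f (u l) = 0) ∧
    (∑ u : Fin n → α, ∑ l, g (u l) = 0) ∧
    (∑ u : Fin n → α, (∑ l, f (u l)) ^ 2 = N ^ n * n) ∧
    (∑ u : Fin n → α, (∑ l, g (u l)) ^ 2 = N ^ n * n) ∧
    (∑ u : Fin n → α, (∑ l, f (u l)) * (∑ l, g (u l)) = N ^ n * (n * c)) ∧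
    (∑ u : Fin n → α, (∑ l, f (u l)) ^ 2 * (∑ l, g (u l)) ^ 2
      = N ^ n * (n * q + n * (n - 1) * (1 + 2 * c ^ 2))) := by
  induction n with
  | zero => simp
  | succ n ih =>
    obtain ⟨h1, h2, h3, h4, h5, h6⟩ := ih
    have hc : ((Fintype.card (Fin n → α) : ℕ) : ℝ) = N ^ n := by
      simp [← hN]
    refine ⟨?_, ?_, ?_, ?_, ?_, ?_⟩
    · rw [sum_cons_rec f g (fun x _ => x)]
      simp [Finset.sum_add_distrib, hf, ← Finset.mul_sum, h1]
    · rw [sum_cons_rec f g (fun _ x => x)]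
      simp [Finset.sum_add_distrib, hg, ← Finset.mul_sum, h2]
    · rw [sum_cons_rec f g (fun x _ => x ^ 2)]
      have : ∀ F : ℝ, ∑ a, (f a + F) ^ 2 = N + N * F ^ 2 := by
        intro F
        have : ∀ a, (f a + F) ^ 2 = f a ^ 2 + f a * (2 * F) + F ^ 2 := fun a => by ring
        simp only [this, Finset.sum_add_distrib, ← Finset.sum_mul, hf, hff, Finset.sum_const,
          Finset.card_univ, nsmul_eq_mul, hN]
        ring
      simp only [this, Finset.sum_add_distrib, ← Finset.mul_sum, h3, Finset.sum_const,
          Finset.card_univ, nsmul_eq_mul, hc]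
      push_cast; ring
    · rw [sum_cons_rec f g (fun _ x => x ^ 2)]
      have : ∀ F : ℝ, ∑ a, (g a + F) ^ 2 = N + N * F ^ 2 := by
        intro F
        have : ∀ a, (g a + F) ^ 2 = g a ^ 2 + g a * (2 * F) + F ^ 2 := fun a => by ring
        simp only [this, Finset.sum_add_distrib, ← Finset.sum_mul, hg, hgg, Finset.sum_const,
          Finset.card_univ, nsmul_eq_mul, hN]
        ring
      simp only [this, Finset.sum_add_distrib, ← Finset.mul_sum, h4, Finset.sum_const,
          Finset.card_univ, nsmul_eq_mul, hc]
      push_cast; ring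
    · rw [sum_cons_rec f g (fun x y => x * y)]
      have : ∀ F G : ℝ, ∑ a, (f a + F) * (g a + G) = N * c + N * (F * G) := by
        intro F G
        have : ∀ a, (f a + F) * (g a + G) = f a * g a + f a * G + g a * F + F * G :=
          fun a => by ring
        simp only [this, Finset.sum_add_distrib, ← Finset.sum_mul, hf, hg, hfg, Finset.sum_const,
          Finset.card_univ, nsmul_eq_mul, hN]
        ring
      simp only [this, Finset.sum_add_distrib, ← Finset.mul_sum, h5, Finset.sum_const,
          Finset.card_univ, nsmul_eq_mul, hc]
      push_cast; ring
    · rw [sum_cons_rec f g (fun x y => x ^ 2 * y ^ 2)]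
      have : ∀ F G : ℝ, ∑ a, (f a + F) ^ 2 * (g a + G) ^ 2
          = N * (F ^ 2 * G ^ 2) + N * F ^ 2 + N * G ^ 2 + (4 * (N * c)) * (F * G)
            + (2 * ∑ a, f a * g a ^ 2) * F + (2 * ∑ a, f a ^ 2 * g a) * G + N * q := by
        intro F G
        have : ∀ a, (f a + F) ^ 2 * (g a + G) ^ 2 = f a ^ 2 * g a ^ 2 + (f a ^ 2 * g a) * (2 * G)
          + (f a * g a ^ 2) * (2 * F) + f a ^ 2 * G ^ 2 + g a ^ 2 * F ^ 2
          + (f a * g a) * (4 * (F * G)) + f a * (2 * F * G ^ 2) + g a * (2 * G * F ^ 2)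
          + F ^ 2 * G ^ 2 :=
          fun a => by ring
        simp only [this, Finset.sum_add_distrib, ← Finset.sum_mul, hf, hg, hff, hgg, hq, hfg,
          Finset.sum_const, Finset.card_univ, nsmul_eq_mul, hN]
        ring
      simp only [this]
      simp only [Finset.sum_add_distrib, ← Finset.mul_sum, h1, h2, h3, h4, h5, h6,
        Finset.sum_const, Finset.card_univ, nsmul_eq_mul, hc]
      push_cast; ring

theorem haar_sum (K i : ℕ) (hK : 1 ≤ K) (h1 : 1 ≤ i) (h2 : i ≤ 2 ^ (K - 1)) (φ : ℝ → ℝ)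
    (h0 : φ 0 = 0) :
    ∑ x : Fin (2 ^ K), φ (haar K i ((x : ℕ) + 1))
      = φ ((2 : ℝ) ^ (((K : ℝ) - 1) / 2)) + φ (-(2 : ℝ) ^ (((K : ℝ) - 1) / 2)) := by
  have hp : 2 ^ K = 2 * 2 ^ (K - 1) := by
    rw [← pow_succ']; congr 1; omega
  rw [Fin.sum_univ_eq_sum_range (fun x => φ (haar K i (x + 1)))]
  have : ∀ x ∈ Finset.range (2 ^ K), φ (haar K i (x + 1))
      = (if x = 2 * i - 2 then φ ((2 : ℝ) ^ (((K : ℝ) - 1) / 2)) else 0)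
       + (if x = 2 * i - 1 then φ (-(2 : ℝ) ^ (((K : ℝ) - 1) / 2)) else 0) := by
    intro x _
    unfold haar
    by_cases ha : x = 2 * i - 2
    · rw [if_pos (by omega), if_pos ha, if_neg (by omega), add_zero]
    · by_cases hb : x = 2 * i - 1
      · rw [if_neg (by omega), if_pos (by omega), if_neg ha, if_pos hb, zero_add]
      · rw [if_neg (by omega), if_neg (by omega), if_neg ha, if_neg hb, h0, zero_add]
  rw [Finset.sum_congr rfl this, Finset.sum_add_distrib, Finset.sum_ite_eq', Finset.sum_ite_eq',
    if_pos (by rw [Finset.mem_range]; omega), if_pos (by rw [Finset.mem_range]; omega)]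

theorem haar_mul (K i j x : ℕ) (hi : 1 ≤ i) (hj : 1 ≤ j) (h : i ≠ j) :
    haar K i x * haar K j x = 0 := by
  unfold haar
  split_ifs <;> first | omega | simp

theorem haar_pair (K i j n : ℕ) (hK : 1 ≤ K) (hi : 1 ≤ i) (hi2 : i ≤ 2 ^ (K - 1))
    (hj : 1 ≤ j) (hj2 : j ≤ 2 ^ (K - 1)) :
    ∑ u : Fin n → Fin (2 ^ K), (∑ l, haar K i ((u l : ℕ) + 1)) ^ 2
        * (∑ l, haar K j ((u l : ℕ) + 1)) ^ 2
      = ((2 : ℝ) ^ K) ^ n * ((n : ℝ) * (n - 1)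
        + if i = j then (n : ℝ) * 2 ^ (K - 1) + 2 * (n * (n - 1)) else 0) := by
  have hc2 : ((2 : ℝ) ^ (((K : ℝ) - 1) / 2)) ^ 2 = 2 ^ (K - 1) := by
    rw [← Real.rpow_natCast, ← Real.rpow_mul (by norm_num), ← Real.rpow_natCast]
    congr 1
    push_cast [Nat.cast_sub hK]; ring
  have hp : (2 : ℝ) ^ K = 2 * 2 ^ (K - 1) := by
    rw [← pow_succ']; congr 1; omega
  have hz : ∀ i, 1 ≤ i → i ≤ 2 ^ (K - 1) →
      ∑ x : Fin (2 ^ K), haar K i ((x : ℕ) + 1) = 0 := by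
    intro i h1 h2
    rw [haar_sum K i hK h1 h2 (fun x => x) rfl]; ring
  have hs : ∀ i, 1 ≤ i → i ≤ 2 ^ (K - 1) →
      ∑ x : Fin (2 ^ K), haar K i ((x : ℕ) + 1) ^ 2 = 2 ^ K := by
    intro i h1 h2
    rw [haar_sum K i hK h1 h2 (fun x => x ^ 2) (by simp), neg_sq, hc2, hp]; ring
  have hcard : (Fintype.card (Fin (2 ^ K)) : ℝ) = 2 ^ K := by simp
  by_cases h : i = j
  · subst h
    have := (moments (fun x : Fin (2 ^ K) => haar K i ((x : ℕ) + 1))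
      (fun x : Fin (2 ^ K) => haar K i ((x : ℕ) + 1)) (2 ^ K) 1 (2 ^ (K - 1)) hcard
      (hz i hi hi2) (hz i hi hi2) (hs i hi hi2) (hs i hi hi2)
      (by simp only [← sq, mul_one]; exact hs i hi hi2)
      (by
        rw [haar_sum K i hK hi hi2 (fun x => x ^ 2 * x ^ 2) (by simp)]
        simp only [neg_sq, hc2]; rw [hp]; ring) n).2.2.2.2.2
    rw [this, if_pos rfl]; ring
  · have := (moments (fun x : Fin (2 ^ K) => haar K i ((x : ℕ) + 1))
      (fun x : Fin (2 ^ K) => haar K j ((x : ℕ) + 1)) (2 ^ K) 0 0 hcard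
      (hz i hi hi2) (hz j hj hj2) (hs i hi hi2) (hs j hj hj2)
      (by simp [haar_mul K i j _ hi hj h])
      (by simp [← mul_pow, haar_mul K i j _ hi hj h]) n).2.2.2.2.2
    rw [this, if_neg h]; ring

/-- Proposition 3.5 (i): for `ΔZ₁,…,ΔZ_n` i.i.d. copies of the Haar mimicking vector
`(ΔZ_ℓ)^j = h_j^(K)(U_ℓ)·√(T/n)` (with `U₁,…,U_n` i.i.d. uniform on `{1,…,2^K}`,
modelled by the uniform measure on `(Fin (2^K))^n`, coordinate `ℓ` encoding
`U_ℓ = u ℓ + 1`),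
`E[(∑_{i=1}^d (∑_{ℓ=1}^n (ΔZ_ℓ)^i)²)²] = (d² + 2d)·T² − (2d + d·(d − 2^(K−1)))·T²/n`. -/
theorem haar_em_fourth_moment (K : ℕ) (hK : 1 ≤ K) (T : ℝ) (hT : 0 < T)
    (n d : ℕ) (hn : 0 < n) (hd : d ≤ 2 ^ (K - 1)) :
    (∑ u : Fin n → Fin (2 ^ K),
        (∑ i ∈ Finset.Icc 1 d,
            (∑ ℓ : Fin n, haar K i ((u ℓ : ℕ) + 1) * Real.sqrt (T / n)) ^ 2) ^ 2)
      / ((2 : ℝ) ^ K) ^ n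
      = ((d : ℝ) ^ 2 + 2 * d) * T ^ 2
        - (2 * d + d * ((d : ℝ) - 2 ^ (K - 1))) * T ^ 2 / n := by
  have hn' : (n : ℝ) ≠ 0 := by positivity
  have hsq : Real.sqrt (T / n) ^ 2 = T / n := Real.sq_sqrt (by positivity)
  have key : ∀ u : Fin n → Fin (2 ^ K),
      (∑ i ∈ Finset.Icc 1 d,
            (∑ ℓ : Fin n, haar K i ((u ℓ : ℕ) + 1) * Real.sqrt (T / n)) ^ 2) ^ 2
      = (T / n) ^ 2 * ∑ i ∈ Finset.Icc 1 d, ∑ j ∈ Finset.Icc 1 d,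
        (∑ l, haar K i ((u l : ℕ) + 1)) ^ 2 * (∑ l, haar K j ((u l : ℕ) + 1)) ^ 2 := by
    intro u
    simp only [← Finset.sum_mul, mul_pow, hsq]
    rw [← Finset.sum_mul_sum]; ring
  simp only [key]
  rw [← Finset.mul_sum, Finset.sum_comm]
  have key2 : ∀ i ∈ Finset.Icc 1 d, ∑ u : Fin n → Fin (2 ^ K), ∑ j ∈ Finset.Icc 1 d,
        (∑ l, haar K i ((u l : ℕ) + 1)) ^ 2 * (∑ l, haar K j ((u l : ℕ) + 1)) ^ 2
      = ((2 : ℝ) ^ K) ^ n * (d * ((n : ℝ) * (n - 1))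
        + ((n : ℝ) * 2 ^ (K - 1) + 2 * (n * (n - 1)))) := by
    intro i hi
    have hi' := Finset.mem_Icc.1 hi
    rw [Finset.sum_comm, Finset.sum_congr rfl (fun j hj => haar_pair K i j n hK hi'.1
      (hi'.2.trans hd) (Finset.mem_Icc.1 hj).1 ((Finset.mem_Icc.1 hj).2.trans hd)),
      ← Finset.mul_sum, Finset.sum_add_distrib, Finset.sum_ite_eq, if_pos hi]
    simp
  rw [Finset.sum_congr rfl key2, Finset.sum_const, Nat.card_Icc, nsmul_eq_mul]
  have hN : ((2 : ℝ) ^ K) ^ n ≠ 0 := by positivity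
  rw [div_eq_iff hN, Nat.add_sub_cancel]
  generalize ((2 : ℝ) ^ K) ^ n = N
  generalize (2 : ℝ) ^ (K - 1) = M
  field_simp
  ring
end

section
/- Let K ∈ ℕ, T > 0, n ∈ ℕ and d ∈ ℕ with d ≤ 2^{K−1}, let φ be a bijection from {1,…,2^{K−1}} onto the collection of odd-cardinality subsets of {1,…,K}, and let ΔZ₁, …, ΔZ_n be independent ℝ^d-valued random vectors, each distributed as the Walsh mimicking vector ΔZ with (ΔZ)^j = τ_{φ(j)}·√(T/n). Then E[( ∑_{i=1}^d ( ∑_{ℓ=1}^n (ΔZ_ℓ)^i )² )²] = (d² + 2d)·T² − 2d·T²/n. -/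
/-- The coordinate Rademacher variable `τ_i` on `Ω_K = {-1,1}^K`, with `{-1,1}`
encoded by `Bool` (`true ↦ 1`, `false ↦ -1`). -/
noncomputable def tau (K : ℕ) (i : Fin K) (ω : Fin K → Bool) : ℝ :=
  if ω i then 1 else -1

/-- The Walsh variable `τ_S = ∏_{i ∈ S} τ_i`, with `τ_∅ ≡ 1`. -/
noncomputable def tauS (K : ℕ) (S : Finset (Fin K)) (ω : Fin K → Bool) : ℝ :=
  ∏ i ∈ S, tau K i ω

lemma tauS_sq (K : ℕ) (S : Finset (Fin K)) (ω : Fin K → Bool) : tauS K S ω ^ 2 = 1 := by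
  unfold tauS
  rw [← Finset.prod_pow]
  apply Finset.prod_eq_one
  intro i _
  unfold tau
  split_ifs <;> norm_num

lemma tauS_orth (K : ℕ) (S U : Finset (Fin K)) (h : S ≠ U) :
    ∑ ω : Fin K → Bool, tauS K S ω * tauS K U ω = 0 := by
  have key : ∀ ω : Fin K → Bool, tauS K S ω * tauS K U ω =
      ∏ i, ((if i ∈ S then (if ω i then (1 : ℝ) else -1) else 1) *
        (if i ∈ U then (if ω i then (1 : ℝ) else -1) else 1)) := by
    intro ω
    rw [Finset.prod_mul_distrib, Finset.prod_ite_mem, Finset.prod_ite_mem]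
    simp [tauS, tau]
  simp_rw [key]
  have h2 := (Fintype.prod_sum (fun (i : Fin K) (b : Bool) =>
    ((if i ∈ S then (if b then (1 : ℝ) else -1) else 1) *
        (if i ∈ U then (if b then (1 : ℝ) else -1) else 1))))
  rw [← h2]
  obtain ⟨i, hi⟩ : ∃ i, ¬ (i ∈ S ↔ i ∈ U) := by
    by_contra hc
    push Not at hc
    exact h (Finset.ext hc)
  apply Finset.prod_eq_zero (Finset.mem_univ i)
  by_cases h1 : i ∈ S <;> by_cases h3 : i ∈ U <;> simp_all

lemma tauS_sum (K : ℕ) (S : Finset (Fin K)) (h : S ≠ ∅) :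
    ∑ ω : Fin K → Bool, tauS K S ω = 0 := by
  have := tauS_orth K S ∅ h
  simpa [tauS] using this

lemma sum_succ_fun {A : Type} [Fintype A] (n : ℕ) (f : (Fin (n + 1) → A) → ℝ) :
    ∑ ω : Fin (n + 1) → A, f ω = ∑ ω : Fin n → A, ∑ x : A, f (Fin.cons x ω) := by
  rw [← (Fin.consEquiv (fun _ : Fin (n + 1) => A)).sum_comp, Fintype.sum_prod_type,
    Finset.sum_comm]
  rfl

lemma walk_moments {A : Type} [Fintype A] (a b : A → ℝ) (N δ : ℝ)
    (hN : ∑ _x : A, (1 : ℝ) = N)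
    (ha : ∀ x, a x ^ 2 = 1) (hb : ∀ x, b x ^ 2 = 1)
    (sa : ∑ x, a x = 0) (sb : ∑ x, b x = 0) (sab : ∑ x, a x * b x = N * δ) (n : ℕ) :
    (∑ _ω : Fin n → A, (1 : ℝ) = N ^ n) ∧
    (∑ ω : Fin n → A, (∑ l, a (ω l)) ^ 2 = n * N ^ n) ∧
    (∑ ω : Fin n → A, (∑ l, b (ω l)) ^ 2 = n * N ^ n) ∧
    (∑ ω : Fin n → A, (∑ l, a (ω l)) * (∑ l, b (ω l)) = n * δ * N ^ n) ∧
    (∑ ω : Fin n → A, (∑ l, a (ω l)) ^ 2 * (∑ l, b (ω l)) ^ 2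
      = ((n : ℝ) ^ 2 + 2 * δ ^ 2 * n * (n - 1)) * N ^ n) := by
  have lin : ∀ c p q r : ℝ, ∑ x, (c * 1 + p * a x + q * b x + r * (a x * b x))
      = c * N + r * (N * δ) := by
    intro c p q r
    simp only [Finset.sum_add_distrib, ← Finset.mul_sum, hN, sa, sb, sab]
    ring
  induction n with
  | zero => simp
  | succ n ih =>
    obtain ⟨h0, h1, h2, h3, h4⟩ := ih
    have glin : ∀ c p q r s : ℝ, ∑ ω : Fin n → A, (c * 1 + p * (∑ l, a (ω l)) ^ 2
        + q * (∑ l, b (ω l)) ^ 2 + r * ((∑ l, a (ω l)) * (∑ l, b (ω l)))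
        + s * ((∑ l, a (ω l)) ^ 2 * (∑ l, b (ω l)) ^ 2))
        = c * N ^ n + p * (n * N ^ n) + q * (n * N ^ n) + r * (n * δ * N ^ n)
          + s * (((n : ℝ) ^ 2 + 2 * δ ^ 2 * n * (n - 1)) * N ^ n) := by
      intro c p q r s
      simp only [Finset.sum_add_distrib, ← Finset.mul_sum, h0, h1, h2, h3, h4]
    have step : ∀ (f g : (ℝ → ℝ → ℝ)) (c p q r s : ℝ),
        (∀ X Y : ℝ, ∑ x, f (a x + X) (b x + Y) =
          c * 1 + p * X ^ 2 + q * Y ^ 2 + r * (X * Y) + s * (X ^ 2 * Y ^ 2)) →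
        ∑ ω : Fin (n + 1) → A, f (∑ l, a (ω l)) (∑ l, b (ω l)) =
          c * N ^ n + p * (n * N ^ n) + q * (n * N ^ n) + r * (n * δ * N ^ n)
          + s * (((n : ℝ) ^ 2 + 2 * δ ^ 2 * n * (n - 1)) * N ^ n) := by
      intro f _ c p q r s hf
      rw [sum_succ_fun, ← glin]
      apply Finset.sum_congr rfl
      intro ω _
      rw [← hf]
      apply Finset.sum_congr rfl
      intro x _
      simp [Fin.sum_univ_succ]
    refine ⟨?_, ?_, ?_, ?_, ?_⟩
    · rw [step (fun _ _ => 1) (fun _ _ => 1) N 0 0 0 0 (by intro X Y; rw [hN]; ring)]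
      ring
    · rw [step (fun X _ => X ^ 2) (fun _ _ => 1) N N 0 0 0 (by
        intro X Y
        refine Eq.trans (Finset.sum_congr rfl (fun x _ => ?_)) ((lin (1 + X ^ 2) (2 * X) 0 0).trans (by ring))
        linear_combination ha x)]
      push_cast; ring
    · rw [step (fun _ Y => Y ^ 2) (fun _ _ => 1) N 0 N 0 0 (by
        intro X Y
        refine Eq.trans (Finset.sum_congr rfl (fun x _ => ?_)) ((lin (1 + Y ^ 2) 0 (2 * Y) 0).trans (by ring))
        linear_combination hb x)]
      push_cast; ring
    · rw [step (fun X Y => X * Y) (fun _ _ => 1) (N * δ) 0 0 N 0 (by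
        intro X Y
        refine Eq.trans (Finset.sum_congr rfl (fun x _ => ?_)) ((lin (X * Y) Y X 1).trans (by ring))
        ring)]
      push_cast; ring
    · rw [step (fun X Y => X ^ 2 * Y ^ 2) (fun _ _ => 1) N N N (4 * N * δ) N (by
        intro X Y
        refine Eq.trans (Finset.sum_congr rfl (fun x _ => ?_))
          ((lin ((1 + X ^ 2) * (1 + Y ^ 2)) (2 * X * (1 + Y ^ 2)) (2 * Y * (1 + X ^ 2))
            (4 * X * Y)).trans (by ring))
        linear_combination (b x + Y) ^ 2 * ha x + (1 + 2 * X * a x + X ^ 2) * hb x)]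
      push_cast; ring

/-- Proposition 3.5 (ii): for `ΔZ₁,…,ΔZ_n` i.i.d. copies of the Walsh mimicking
vector `(ΔZ_ℓ)^j = τ_{φ(j)}·√(T/n)` (independent copies modelled by the uniform
measure on the product `(Ω_K)^n`, with `Ω_K = {-1,1}^K` of cardinality `2^K`),
`E[(∑_{i=1}^d (∑_{ℓ=1}^n (ΔZ_ℓ)^i)²)²] = (d² + 2d)·T² − 2d·T²/n`. -/
theorem walsh_em_fourth_moment (K : ℕ) (hK : 1 ≤ K) (T : ℝ) (hT : 0 < T)
    (n d : ℕ) (hn : 0 < n) (hd : d ≤ 2 ^ (K - 1))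
    (φ : ℕ → Finset (Fin K))
    (hφ : Set.BijOn φ (↑(Finset.Icc 1 (2 ^ (K - 1))) : Set ℕ)
      {S : Finset (Fin K) | Odd S.card}) :
    (∑ ω : Fin n → Fin K → Bool,
        (∑ i ∈ Finset.Icc 1 d,
            (∑ ℓ : Fin n, tauS K (φ i) (ω ℓ) * Real.sqrt (T / n)) ^ 2) ^ 2)
      / ((2 : ℝ) ^ K) ^ n
      = ((d : ℝ) ^ 2 + 2 * d) * T ^ 2 - 2 * d * T ^ 2 / n := by
  have hinj : ∀ i ∈ Finset.Icc 1 d, ∀ j ∈ Finset.Icc 1 d, φ i = φ j → i = j := by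
    intro i hi j hj h
    rw [Finset.mem_Icc] at hi hj
    exact hφ.injOn (by simp; omega) (by simp; omega) h
  have hne : ∀ i ∈ Finset.Icc 1 d, φ i ≠ ∅ := by
    intro i hi h
    rw [Finset.mem_Icc] at hi
    have := hφ.mapsTo (show i ∈ (↑(Finset.Icc 1 (2 ^ (K - 1))) : Set ℕ) by simp; omega)
    simp [h] at this
  have hn' : (n : ℝ) ≠ 0 := by positivity
  have hs : Real.sqrt (T / n) ^ 2 = T / n := Real.sq_sqrt (by positivity)
  have e1 : ∀ ω : Fin n → Fin K → Bool,
      (∑ i ∈ Finset.Icc 1 d,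
            (∑ ℓ : Fin n, tauS K (φ i) (ω ℓ) * Real.sqrt (T / n)) ^ 2) ^ 2 =
      (T / n) ^ 2 * ∑ i ∈ Finset.Icc 1 d, ∑ j ∈ Finset.Icc 1 d,
        (∑ ℓ, tauS K (φ i) (ω ℓ)) ^ 2 * (∑ ℓ, tauS K (φ j) (ω ℓ)) ^ 2 := by
    intro ω
    simp_rw [← Finset.sum_mul, mul_pow, hs]
    rw [← Finset.sum_mul, mul_pow, ← Finset.sum_mul_sum]
    ring
  have hN : ∑ _x : Fin K → Bool, (1 : ℝ) = 2 ^ K := by simp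
  have e2 : ∀ i ∈ Finset.Icc 1 d, ∀ j ∈ Finset.Icc 1 d,
      ∑ ω : Fin n → Fin K → Bool,
        (∑ ℓ, tauS K (φ i) (ω ℓ)) ^ 2 * (∑ ℓ, tauS K (φ j) (ω ℓ)) ^ 2 =
      (n : ℝ) ^ 2 * (2 ^ K) ^ n
        + if i = j then (2 * n * (n - 1)) * ((2 : ℝ) ^ K) ^ n else 0 := by
    intro i hi j hj
    have hm := fun δ h => (walk_moments (tauS K (φ i)) (tauS K (φ j)) (2 ^ K) δ hN
      (tauS_sq K _) (tauS_sq K _) (tauS_sum K _ (hne i hi)) (tauS_sum K _ (hne j hj)) h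
      n).2.2.2.2
    split_ifs with hij
    · rw [hm 1 (by subst hij; simp_rw [← pow_two, tauS_sq]; rw [hN]; ring)]
      ring
    · rw [hm 0 (by rw [tauS_orth K _ _ (fun h => hij (hinj i hi j hj h))]; ring)]
      ring
  simp_rw [e1]
  rw [← Finset.mul_sum, Finset.sum_comm]
  have e3 : ∑ i ∈ Finset.Icc 1 d, ∑ ω : Fin n → Fin K → Bool, ∑ j ∈ Finset.Icc 1 d,
        (∑ ℓ, tauS K (φ i) (ω ℓ)) ^ 2 * (∑ ℓ, tauS K (φ j) (ω ℓ)) ^ 2 =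
      (d ^ 2 * (n : ℝ) ^ 2 + d * (2 * n * (n - 1))) * ((2 : ℝ) ^ K) ^ n := by
    have : ∀ i ∈ Finset.Icc 1 d, ∑ ω : Fin n → Fin K → Bool, ∑ j ∈ Finset.Icc 1 d,
        (∑ ℓ, tauS K (φ i) (ω ℓ)) ^ 2 * (∑ ℓ, tauS K (φ j) (ω ℓ)) ^ 2 =
        d * ((n : ℝ) ^ 2 * (2 ^ K) ^ n) + (2 * n * (n - 1)) * ((2 : ℝ) ^ K) ^ n := by
      intro i hi
      rw [Finset.sum_comm, Finset.sum_congr rfl (e2 i hi), Finset.sum_add_distrib,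
        Finset.sum_ite_eq, if_pos hi]
      simp
    rw [Finset.sum_congr rfl this]
    simp
    ring
  rw [e3]
  field_simp
  ring
end
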